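/- Let a = (a_1,…,a_n) and suppose a_i b_j ∉ q^{−ℕ} for all 1 ≤ i, j ≤ n, and 0 < |t| < 1. Then for every N ∈ ℕ the series defining I(q^N t; a) converges absolutely (its summand vanishes for ν outside ℕⁿ, since (q^{1+ν_i})_∞ = 0 when ν_i < 0), and lim_{N→∞} I(q^N t; a) = (1−q)ⁿ · ∏_{1≤i<j≤n} (a_j − a_i) · ∏_{i=1}^n ∏_{j=1}^n (q a_i a_j⁻¹)_∞ / (a_i b_j)_∞. (Asymptotic behavior of the truncated Milne–Gustafson sum.) -/

import Mathlib

/-!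
With base point `x = a`, the diagonal numerators `(q ^ (1 + ν i))_∞` vanish as soon as some
`ν i < 0`, so `I(t; a)` is a power series `∑ t ^ (ν₁ + ⋯ + νₙ) * c ν` over `ν ∈ ℕⁿ`. Its
coefficients are bounded: `(z)_∞ → 1` as `z → 0`, so each ratio of q-Pochhammer symbols converges
along `aᵢ qᵐ`, and the Vandermonde factor is bounded because `|q| < 1`. Such a series converges
absolutely for `|t| < 1` and tends to its constant term `c 0` as `t → 0`; the theorem is the case
`t ↦ q ^ N * t`.
-/

open scoped BigOperators
open Finset

/-- The infinite q-Pochhammer symbol `(a)_∞ = ∏_{i=0}^∞ (1 - qⁱ a)`. -/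
noncomputable def qp (q a : ℂ) : ℂ := ∏' i : ℕ, (1 - q ^ i * a)

/-- Summand of the normalized Jackson integral of Milne–Gustafson type. -/
noncomputable def mgTerm {n : ℕ} (q t : ℂ) (a b x : Fin n → ℂ) (ν : Fin n → ℤ) : ℂ :=
  t ^ (∑ i, ν i) *
    (∏ i, ∏ j, qp q (q * (a j)⁻¹ * (x i * q ^ ν i)) / qp q (b j * (x i * q ^ ν i))) *
    ∏ i, ∏ j ∈ Finset.Ioi i, (x j * q ^ ν j - x i * q ^ ν i)

/-- The normalized Jackson integral of Milne–Gustafson type `I(t;x)`. -/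
noncomputable def mgSum {n : ℕ} (q t : ℂ) (a b x : Fin n → ℂ) : ℂ :=
  (1 - q) ^ n * ∑' ν : Fin n → ℤ, mgTerm q t a b x ν

open Filter Topology

section PowerSeries

variable {ι : Type*} [Fintype ι]

lemma summable_prod_pi_of_nonneg {κ : ι → Type*} {f : ∀ i, κ i → ℝ} (hf : ∀ i, Summable (f i))
    (hf0 : ∀ i k, 0 ≤ f i k) : Summable fun ν : ∀ i, κ i => ∏ i, f i (ν i) := by
  classical
  refine summable_of_sum_le (c := ∏ i, ∑' k, f i k) (fun ν => prod_nonneg fun i _ => hf0 i (ν i))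
    fun u => ?_
  have hu : u ⊆ Fintype.piFinset fun i => u.image fun ν => ν i := fun ν hν =>
    Fintype.mem_piFinset.2 fun i => mem_image_of_mem (fun ν => ν i) hν
  calc ∑ ν ∈ u, ∏ i, f i (ν i)
      ≤ ∑ ν ∈ Fintype.piFinset fun i => u.image fun ν => ν i, ∏ i, f i (ν i) :=
        sum_le_sum_of_subset_of_nonneg hu fun ν _ _ => prod_nonneg fun i _ => hf0 i (ν i)
    _ = ∏ i, ∑ k ∈ u.image fun ν => ν i, f i k := (prod_univ_sum _ _).symm
    _ ≤ ∏ i, ∑' k, f i k := prod_le_prod (fun i _ => sum_nonneg fun k _ => hf0 i k)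
        fun i _ => (hf i).sum_le_tsum _ fun k _ => hf0 i k

lemma summable_pow_sum {r : ℝ} (hr0 : 0 ≤ r) (hr1 : r < 1) :
    Summable fun ν : ι → ℕ => r ^ ∑ i, ν i := by
  simpa only [prod_pow_eq_pow_sum] using
    summable_prod_pi_of_nonneg (fun _ : ι => summable_geometric_of_lt_one hr0 hr1)
      fun _ k => pow_nonneg hr0 k

variable {R : Type*} [NormedRing R] [NormOneClass R] {c : (ι → ℕ) → R} {C : ℝ}

lemma norm_pow_sum_mul_le (hc : ∀ ν, ‖c ν‖ ≤ C) {t : R} {r : ℝ} (ht : ‖t‖ ≤ r) (ν : ι → ℕ) :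
    ‖t ^ (∑ i, ν i) * c ν‖ ≤ r ^ (∑ i, ν i) * C := by
  have hr : 0 ≤ r := (norm_nonneg t).trans ht
  calc ‖t ^ (∑ i, ν i) * c ν‖ ≤ ‖t‖ ^ (∑ i, ν i) * ‖c ν‖ :=
        (norm_mul_le _ _).trans (by gcongr; exact norm_pow_le t _)
    _ ≤ r ^ (∑ i, ν i) * C := by gcongr; exact hc ν

variable [CompleteSpace R]

lemma summable_pow_sum_mul (hc : ∀ ν, ‖c ν‖ ≤ C) {t : R} (ht : ‖t‖ < 1) :
    Summable fun ν => t ^ (∑ i, ν i) * c ν :=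
  .of_norm_bounded ((summable_pow_sum (norm_nonneg t) ht).mul_right C)
    (norm_pow_sum_mul_le hc le_rfl)

lemma tendsto_tsum_pow_sum_mul (hc : ∀ ν, ‖c ν‖ ≤ C) :
    Tendsto (fun t : R => ∑' ν, t ^ (∑ i, ν i) * c ν) (𝓝 0) (𝓝 (c 0)) := by
  have constant_term : ∑' ν, (0 : R) ^ (∑ i, ν i) * c ν = c 0 := by
    rw [tsum_eq_single 0 fun ν hν => ?_]
    · simp
    · have hsum : ∑ i, ν i ≠ 0 := by simpa [sum_eq_zero_iff, funext_iff] using hν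
      rw [zero_pow hsum, zero_mul]
  rw [← constant_term]
  refine tendsto_tsum_of_dominated_convergence
    ((summable_pow_sum one_half_pos.le one_half_lt_one).mul_right C)
    (fun ν => ((continuous_pow (∑ i, ν i)).mul continuous_const).tendsto 0) ?_
  filter_upwards [Metric.closedBall_mem_nhds (0 : R) one_half_pos] with t ht
  exact norm_pow_sum_mul_le hc (mem_closedBall_zero_iff.1 ht)

end PowerSeries

lemma norm_prod_Ioi_sub_le {ι R : Type*} [Fintype ι] [Preorder ι] [LocallyFiniteOrderTop ι]
    [NormedCommRing R] [NormOneClass R] {v : ι → R} {r : ι → ℝ} (hv : ∀ i, ‖v i‖ ≤ r i) :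
    ‖∏ i, ∏ j ∈ Ioi i, (v j - v i)‖ ≤ ∏ i, ∏ j ∈ Ioi i, (r j + r i) :=
  (Finset.norm_prod_le _ _).trans <| prod_le_prod (fun _ _ => norm_nonneg _) fun i _ =>
    (Finset.norm_prod_le _ _).trans <| prod_le_prod (fun _ _ => norm_nonneg _) fun j _ =>
      norm_sub_le_of_le (hv j) (hv i)

section QPochhammer

variable {q : ℂ}

lemma qp_eq_zero_of_pow_mul_eq_one {z : ℂ} {m : ℕ} (h : q ^ m * z = 1) : qp q z = 0 :=
  tprod_of_exists_eq_zero ⟨m, by rw [h, sub_self]⟩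

lemma qp_zpow_eq_zero (hq : q ≠ 0) {m : ℤ} (hm : m ≤ 0) : qp q (q ^ m) = 0 := by
  refine qp_eq_zero_of_pow_mul_eq_one (m := (-m).toNat) ?_
  rw [← zpow_natCast, Int.toNat_of_nonneg (neg_nonneg.2 hm), ← zpow_add₀ hq, neg_add_cancel,
    zpow_zero]

lemma tendsto_qp_zero (hq : ‖q‖ < 1) : Tendsto (qp q) (𝓝 0) (𝓝 1) := by
  have hlim : Tendsto (fun z : ℂ => ∏' i : ℕ, (1 + -(q ^ i * z))) (𝓝 0)
      (𝓝 (∏' _ : ℕ, (1 + 0))) := by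
    refine tendsto_tprod_one_add_of_dominated_convergence
      (summable_geometric_of_lt_one (norm_nonneg q) hq)
      (fun i => (by fun_prop : Continuous fun z : ℂ => -(q ^ i * z)).tendsto' 0 0 (by simp)) ?_
    filter_upwards [Metric.closedBall_mem_nhds (0 : ℂ) one_pos] with z hz i
    rw [norm_neg, norm_mul, norm_pow]
    exact mul_le_of_le_one_right (by positivity) (mem_closedBall_zero_iff.1 hz)
  simpa only [← sub_eq_add_neg, add_zero, tprod_one] using! hlim

end QPochhammer

section MilneGustafson

variable {n : ℕ} {q : ℂ} {a : Fin n → ℂ}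

/-- The one-variable factor `∏ⱼ (q aⱼ⁻¹ z)_∞ / (bⱼ z)_∞` of the Milne–Gustafson integrand, apart
from the power of `z`. -/
noncomputable def mgWeight (q : ℂ) (a b : Fin n → ℂ) (z : ℂ) : ℂ :=
  ∏ j, qp q (q * (a j)⁻¹ * z) / qp q (b j * z)

lemma mgWeight_mul_zpow_eq_zero (hq : q ≠ 0) {i : Fin n} (hai : a i ≠ 0) (b : Fin n → ℂ) {m : ℤ}
    (hm : m < 0) : mgWeight q a b (a i * q ^ m) = 0 := by
  have harg : q * (a i)⁻¹ * (a i * q ^ m) = q ^ (m + 1) := by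
    rw [zpow_add_one₀ hq]
    field_simp
  exact prod_eq_zero (mem_univ i) (by rw [harg, qp_zpow_eq_zero hq hm, zero_div])

lemma tendsto_mgWeight (hq : ‖q‖ < 1) (a b : Fin n → ℂ) :
    Tendsto (mgWeight q a b) (𝓝 0) (𝓝 1) := by
  have hqp (c : ℂ) : Tendsto (fun z => qp q (c * z)) (𝓝 0) (𝓝 1) :=
    (tendsto_qp_zero hq).comp ((continuous_const_mul c).tendsto' 0 0 (mul_zero c))
  simpa only [div_one, prod_const_one] using!
    tendsto_finsetProd univ fun j _ => (hqp (q * (a j)⁻¹)).div (hqp (b j)) one_ne_zero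

-- A zero denominator makes Lean's quotient `0`, and convergence of `(bⱼ x qᵐ)_∞` to `1` allows this
-- only for finitely many `m`.
lemma exists_norm_mgWeight_le (hq : ‖q‖ < 1) (a b : Fin n → ℂ) (x : ℂ) :
    ∃ K, ∀ m : ℕ, ‖mgWeight q a b (x * q ^ m)‖ ≤ K := by
  have hx : Tendsto (fun m : ℕ => x * q ^ m) atTop (𝓝 0) := by
    simpa using (tendsto_pow_atTop_nhds_zero_of_norm_lt_one hq).const_mul x
  obtain ⟨K, hK⟩ := ((tendsto_mgWeight hq a b).comp hx).norm.bddAbove_range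
  exact ⟨K, fun m => hK ⟨m, rfl⟩⟩

/-- The coefficient of `t ^ (ν₁ + ⋯ + νₙ)` in the Jackson integral `I(t; x)`. -/
noncomputable def mgCoeff (q : ℂ) (a b x : Fin n → ℂ) (ν : Fin n → ℤ) : ℂ :=
  (∏ i, mgWeight q a b (x i * q ^ ν i)) * ∏ i, ∏ j ∈ Ioi i, (x j * q ^ ν j - x i * q ^ ν i)

lemma mgTerm_eq_zpow_mul_mgCoeff (q t : ℂ) (a b x : Fin n → ℂ) (ν : Fin n → ℤ) :
    mgTerm q t a b x ν = t ^ (∑ i, ν i) * mgCoeff q a b x ν :=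
  mul_assoc _ _ _

lemma mgTerm_natCast (q t : ℂ) (a b x : Fin n → ℂ) (ν : Fin n → ℕ) :
    mgTerm q t a b x (Nat.cast ∘ ν) = t ^ (∑ i, ν i) * mgCoeff q a b x (Nat.cast ∘ ν) := by
  simp only [mgTerm_eq_zpow_mul_mgCoeff, Function.comp_apply, ← Nat.cast_sum, zpow_natCast]

lemma exists_norm_mgCoeff_le (hq : ‖q‖ < 1) (a b x : Fin n → ℂ) :
    ∃ C, ∀ ν : Fin n → ℕ, ‖mgCoeff q a b x (Nat.cast ∘ ν)‖ ≤ C := by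
  choose K hK using fun i => exists_norm_mgWeight_le hq a b (x i)
  refine ⟨(∏ i, K i) * ∏ i, ∏ j ∈ Ioi i, (‖x j‖ + ‖x i‖), fun ν => ?_⟩
  have hx (i : Fin n) : ‖x i * q ^ ν i‖ ≤ ‖x i‖ := by
    rw [norm_mul, norm_pow]
    exact mul_le_of_le_one_right (norm_nonneg _) (pow_le_one₀ (norm_nonneg q) hq.le)
  simp only [mgCoeff, Function.comp_apply, zpow_natCast, norm_mul (∏ _, mgWeight _ _ _ _),
    norm_prod univ fun _ => mgWeight _ _ _ _]
  gcongr with i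
  · exact prod_nonneg fun i _ => (norm_nonneg _).trans (hK i 0)
  · exact hK i (ν i)
  · exact norm_prod_Ioi_sub_le hx

lemma mgCoeff_zero (q : ℂ) (a b : Fin n → ℂ) :
    mgCoeff q a b a (Nat.cast ∘ (0 : Fin n → ℕ)) = (∏ i, ∏ j ∈ Ioi i, (a j - a i)) *
      ∏ i, ∏ j, qp q (q * a i * (a j)⁻¹) / qp q (a i * b j) := by
  simp only [mgCoeff, mgWeight, Function.comp_apply, Pi.zero_apply, Nat.cast_zero, zpow_zero,
    mul_one, mul_right_comm q _ (a _), mul_comm (b _) (a _)]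
  exact mul_comm _ _

lemma mgTerm_eq_zero_of_notMem_range (hq : q ≠ 0) (ha : ∀ i, a i ≠ 0) (t : ℂ) (b : Fin n → ℂ)
    {ν : Fin n → ℤ} (hν : ν ∉ Set.range fun μ : Fin n → ℕ => Nat.cast ∘ μ) :
    mgTerm q t a b a ν = 0 := by
  obtain ⟨i, hi⟩ : ∃ i, ν i < 0 := by
    by_contra! h
    lift ν to Fin n → ℕ using h
    exact hν ⟨ν, rfl⟩
  rw [mgTerm_eq_zpow_mul_mgCoeff, mgCoeff,
    prod_eq_zero (mem_univ i) (mgWeight_mul_zpow_eq_zero hq (ha i) b hi), zero_mul, mul_zero]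

lemma summable_mgTerm (hq0 : q ≠ 0) (hq1 : ‖q‖ < 1) (ha : ∀ i, a i ≠ 0) (b : Fin n → ℂ) {t : ℂ}
    (ht : ‖t‖ < 1) : Summable (mgTerm q t a b a) := by
  obtain ⟨C, hC⟩ := exists_norm_mgCoeff_le hq1 a b a
  rw [← Nat.cast_injective.comp_left.summable_iff fun _ =>
    mgTerm_eq_zero_of_notMem_range hq0 ha t b]
  exact (summable_pow_sum_mul hC ht).congr fun ν => (mgTerm_natCast q t a b a ν).symm

lemma mgSum_eq_tsum_nat (hq : q ≠ 0) (ha : ∀ i, a i ≠ 0) (t : ℂ) (b : Fin n → ℂ) :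
    mgSum q t a b a =
      (1 - q) ^ n * ∑' ν : Fin n → ℕ, t ^ (∑ i, ν i) * mgCoeff q a b a (Nat.cast ∘ ν) := by
  have hsupp : Function.support (mgTerm q t a b a) ⊆
      Set.range fun μ : Fin n → ℕ => Nat.cast ∘ μ :=
    Function.support_subset_iff'.2 fun _ => mgTerm_eq_zero_of_notMem_range hq ha t b
  simp only [mgSum, ← mgTerm_natCast, Nat.cast_injective.comp_left.tsum_eq hsupp]

end MilneGustafson

theorem milne_gustafson_truncated_asymptotics_general {n : ℕ} {q : ℂ} (hq0 : q ≠ 0) (hq1 : ‖q‖ < 1)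
    {a b : Fin n → ℂ} (ha : ∀ i, a i ≠ 0) (hab : ∀ i j, ∀ m : ℕ, a i * b j ≠ (q ^ m)⁻¹) :
    (∀ t : ℂ, ‖t‖ < 1 → Summable (mgTerm q t a b a)) ∧
      Tendsto (fun t => mgSum q t a b a) (𝓝 0)
        (𝓝 ((1 - q) ^ n * (∏ i, ∏ j ∈ Ioi i, (a j - a i)) *
          ∏ i, ∏ j, qp q (q * a i * (a j)⁻¹) / qp q (a i * b j))) := by
  refine ⟨fun t ht => summable_mgTerm hq0 hq1 ha b ht, ?_⟩
  obtain ⟨C, hC⟩ := exists_norm_mgCoeff_le hq1 a b a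
  simp only [mgSum_eq_tsum_nat hq0 ha]
  rw [mul_assoc, ← mgCoeff_zero]
  exact (tendsto_tsum_pow_sum_mul hC).const_mul _

/-- Asymptotic behavior of the truncated Milne–Gustafson sum. -/
theorem milne_gustafson_truncated_asymptotics
    (q : ℝ) (hq0 : 0 < q) (hq1 : q < 1) (n : ℕ) (hn : 1 ≤ n)
    (a b : Fin n → ℂ) (ha : ∀ i, a i ≠ 0) (hb : ∀ i, b i ≠ 0)
    (t : ℂ) (ht0 : t ≠ 0) (hupp : ‖t‖ < 1)
    (hab : ∀ i j, ∀ m : ℕ, a i * b j ≠ ((q : ℂ) ^ m)⁻¹) :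
    (∀ N : ℕ, Summable (mgTerm (q : ℂ) ((q : ℂ) ^ N * t) a b a)) ∧
      Filter.Tendsto (fun N : ℕ => mgSum (q : ℂ) ((q : ℂ) ^ N * t) a b a) Filter.atTop
        (nhds ((1 - (q : ℂ)) ^ n * (∏ i, ∏ j ∈ Finset.Ioi i, (a j - a i)) *
          ∏ i, ∏ j, qp (q : ℂ) ((q : ℂ) * a i * (a j)⁻¹) / qp (q : ℂ) (a i * b j))) := by
  have hq0' : (q : ℂ) ≠ 0 := by exact_mod_cast hq0.ne'
  have hq1' : ‖(q : ℂ)‖ < 1 := by rwa [Complex.norm_real, Real.norm_of_nonneg hq0.le]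
  obtain ⟨hsum, hlim⟩ := milne_gustafson_truncated_asymptotics_general hq0' hq1' ha hab
  refine ⟨fun N => hsum _ ?_, hlim.comp ?_⟩
  · rw [norm_mul, norm_pow]
    exact mul_lt_one_of_nonneg_of_lt_one_right (pow_le_one₀ (norm_nonneg _) hq1'.le)
      (norm_nonneg t) hupp
  · simpa using (tendsto_pow_atTop_nhds_zero_of_norm_lt_one hq1').mul_const t
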